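/- arXiv:2003.08687 — 4 statements merged into one kernel-verified Lean document; each statement's English description precedes it below -/
import Mathlib

section
/- Let f_1, ..., f_m : ℝ^d → ℝ^d be contracting similarity maps, all with ratio r ∈ (0,1), and let A be a nonempty compact set with A = ⋃_{k=1}^m f_k(A). Suppose x̃ ∈ ℝ^d satisfies x̃ = (1/m) ∑_{k=1}^m f_k(x̃), and set δ = max_{k=1,...,m} ‖f_k(x̃) − x̃‖. If h : ℝ^d → ℝ^d is an isometry with ‖h(x̃) − x̃‖ > 2δ/(1−r), then h(A) and A are disjoint. -/
/-! If `A` is covered by its images under `K`-Lipschitz maps that displace `x` by at most `δ`, then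
its farthest distance `D` from `x` satisfies `D ≤ K * D + δ`, so `A` lies in the closed ball of
radius `R = δ / (1 - K)` around `x`. A `C`-Lipschitz map `h` sends this ball into the ball of
radius `C * R` around `h x`, and the two balls are disjoint once `(C + 1) * R < dist (h x) x`. -/

open Metric Set
open scoped NNReal

section PseudoMetricSpace

variable {ι X : Type*} [PseudoMetricSpace X] {K : ℝ≥0} {f : ι → X → X} {A : Set X} {x : X} {δ : ℝ}

theorem subset_closedBall_of_subset_iUnion_image {R : ℝ}
    (hf : ∀ k, LipschitzWith K (f k)) (hδ : ∀ k, dist (f k x) x ≤ δ)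
    (hA : A ⊆ ⋃ k, f k '' A) (hAR : A ⊆ closedBall x R) :
    A ⊆ closedBall x (K * R + δ) := by
  refine hA.trans (iUnion_subset fun k => ?_)
  calc f k '' A ⊆ closedBall (f k x) (K * R) :=
        (((hf k).mapsTo_closedBall x R).mono_left hAR).image_subset
    _ ⊆ closedBall x (K * R + δ) := closedBall_subset_closedBall' (by gcongr; exact hδ k)

theorem subset_closedBall_div_one_sub_of_subset_iUnion_image (hK : K < 1)
    (hf : ∀ k, LipschitzWith K (f k)) (hδ : ∀ k, dist (f k x) x ≤ δ)
    (hbdd : Bornology.IsBounded A) (hA : A ⊆ ⋃ k, f k '' A) :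
    A ⊆ closedBall x (δ / (1 - K)) := by
  intro a ha
  have : Nonempty A := ⟨a, ha⟩
  obtain ⟨R, hR⟩ := hbdd.subset_closedBall x
  have hrange : BddAbove (range fun b : A => dist (b : X) x) :=
    ⟨R, forall_mem_range.2 fun b => hR b.2⟩
  set D := ⨆ b : A, dist (b : X) x
  have hAD : A ⊆ closedBall x D := fun b hb => le_ciSup hrange ⟨b, hb⟩
  have hD : D ≤ K * D + δ :=
    ciSup_le fun b => subset_closedBall_of_subset_iUnion_image hf hδ hA hAD b.2
  have hDδ : D ≤ δ / (1 - K) := by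
    rw [le_div_iff₀ (sub_pos.2 (mod_cast hK))]
    linarith
  exact closedBall_subset_closedBall hDδ (hAD ha)

theorem disjoint_image_of_subset_closedBall {Y : Type*} [PseudoMetricSpace Y] {C : ℝ≥0}
    {h : X → Y} {B : Set Y} {y : Y} {R S : ℝ} (hh : LipschitzWith C h)
    (hA : A ⊆ closedBall x R) (hB : B ⊆ closedBall y S) (hfar : C * R + S < dist (h x) y) :
    Disjoint (h '' A) B :=
  (closedBall_disjoint_closedBall hfar).mono
    ((hh.mapsTo_closedBall x R).mono_left hA).image_subset hB

theorem stmt_2_general {C : ℝ≥0} {h : X → X} (hK : K < 1)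
    (hf : ∀ k, LipschitzWith K (f k)) (hδ : ∀ k, dist (f k x) x ≤ δ)
    (hbdd : Bornology.IsBounded A) (hA : A ⊆ ⋃ k, f k '' A)
    (hh : LipschitzWith C h) (hfar : (C + 1) * δ / (1 - K) < dist (h x) x) :
    Disjoint (h '' A) A := by
  have hball := subset_closedBall_div_one_sub_of_subset_iUnion_image hK hf hδ hbdd hA
  refine disjoint_image_of_subset_closedBall hh hball hball ?_
  rwa [← add_one_mul, ← mul_div_assoc]

end PseudoMetricSpace

/-- If an isometry `h` moves the center of gravity `x₀` by more than `2δ/(1-r)`,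
then `h(A)` and `A` are disjoint. -/
theorem stmt_2 {d : ℕ} {m : ℕ} (hm : 0 < m)
    (f : Fin m → EuclideanSpace ℝ (Fin d) → EuclideanSpace ℝ (Fin d))
    (r : ℝ) (hr0 : 0 < r) (hr1 : r < 1)
    (hsim : ∀ k, ∀ x y, dist (f k x) (f k y) = r * dist x y)
    (A : Set (EuclideanSpace ℝ (Fin d))) (hA : A.Nonempty) (hAc : IsCompact A)
    (hself : A = ⋃ k, f k '' A)
    (x₀ : EuclideanSpace ℝ (Fin d)) (hx : x₀ = (m : ℝ)⁻¹ • ∑ k, f k x₀)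
    (δ : ℝ) (hδ : δ = ⨆ k, ‖f k x₀ - x₀‖)
    (h : EuclideanSpace ℝ (Fin d) → EuclideanSpace ℝ (Fin d)) (hiso : Isometry h)
    (hfar : ‖h x₀ - x₀‖ > 2 * δ / (1 - r)) :
    Disjoint (h '' A) A := by
  simp only [← dist_eq_norm] at hδ hfar
  have hlip (k) : LipschitzWith ⟨r, hr0.le⟩ (f k) := .of_dist_le_mul fun x y => (hsim k x y).le
  exact stmt_2_general hr1 hlip (fun k => hδ ▸ Finite.le_ciSup _ k) hAc.isBounded hself.subset
    hiso.lipschitz (by rwa [NNReal.coe_one, one_add_one_eq_two])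
end

section
/- (Hata's connectedness criterion.) Let f_1, ..., f_m : ℝ^d → ℝ^d be contracting similarity maps, all with ratio r ∈ (0,1), and let A be a nonempty compact set with A = ⋃_{k=1}^m f_k(A). Define the connectedness graph G_c as the simple graph on the vertex set {1,...,m} in which distinct vertices k and j are adjacent if and only if f_k(A) ∩ f_j(A) ≠ ∅. Then A is a connected topological space if and only if the graph G_c is connected. -/
/-!
If the graph is disconnected, the pieces indexed by one of its components and the remaining
pieces form two disjoint nonempty closed sets covering `A`.

Conversely, every bounded set can be traversed by jumps of length at most its diameter. Let the
maps `f k` be `K`-Lipschitz with `K < 1`. If `A` can be traversed by jumps of length at most `ε`,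
then each piece `f k '' A` can be traversed by jumps of length at most `K * ε`; when the graph is
connected, one passes from piece to piece through common points, so `A` itself can be traversed
by jumps of length at most `K * ε`. Iterating, arbitrarily short jumps suffice, whereas a
disconnected compact set has two parts a positive distance apart.
-/

open Set Filter Topology Relation
open scoped NNReal

section IntersectionGraph

variable {X ι : Type*} {s : ι → Set X} {i j : ι}

/-- The intersection graph of a family of sets: the vertices are the indices, and distinct indices
are adjacent when the corresponding sets meet. For the pieces of an attractor it is the
connectedness graph `G_c`. -/
def intersectionGraph (s : ι → Set X) : SimpleGraph ι where
  Adj i j := i ≠ j ∧ (s i ∩ s j).Nonempty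
  symm := ⟨fun _ _ h => ⟨h.1.symm, inter_comm _ _ ▸ h.2⟩⟩
  loopless := ⟨fun _ h => h.1 rfl⟩

theorem intersectionGraph_reachable_of_inter_nonempty (h : (s i ∩ s j).Nonempty) :
    (intersectionGraph s).Reachable i j := by
  rcases eq_or_ne i j with rfl | hij
  · exact .refl i
  · exact SimpleGraph.Adj.reachable ⟨hij, h⟩

theorem intersectionGraph_preconnected_of_isPreconnected_iUnion [TopologicalSpace X]
    (hfin : LocallyFinite s) (hclosed : ∀ i, IsClosed (s i)) (hne : ∀ i, (s i).Nonempty)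
    (hconn : IsPreconnected (⋃ i, s i)) : (intersectionGraph s).Preconnected := by
  intro i j
  by_contra hij
  let C : Set ι := {k | (intersectionGraph s).Reachable i k}
  have isClosed_biUnion (T : Set ι) : IsClosed (⋃ k ∈ T, s k) := by
    rw [biUnion_eq_iUnion]
    exact (hfin.comp_injective Subtype.val_injective).isClosed_iUnion fun k => hclosed k
  have meets {T : Set ι} {k : ι} (hk : k ∈ T) : ((⋃ i, s i) ∩ ⋃ i ∈ T, s i).Nonempty :=
    (hne k).mono (subset_inter (subset_iUnion s k) (subset_biUnion_of_mem hk))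
  obtain ⟨x, -, hxC, hxC'⟩ := isPreconnected_closed_iff.1 hconn _ _
    (isClosed_biUnion C) (isClosed_biUnion Cᶜ) (iSup_split s (· ∈ C)).le
    (meets (SimpleGraph.Reachable.refl i)) (meets (T := Cᶜ) hij)
  obtain ⟨a, ha, hxa⟩ := mem_iUnion₂.1 hxC
  obtain ⟨b, hb, hxb⟩ := mem_iUnion₂.1 hxC'
  exact hb (ha.trans (intersectionGraph_reachable_of_inter_nonempty ⟨x, hxa, hxb⟩))

end IntersectionGraph

/-- A set is `ε`-chainable if any two of its points are joined by a finite chain of points of the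
set whose consecutive distances are at most `ε`. The chain lives in the subtype, so that it cannot
leave the set. -/
def IsChainable {X : Type*} [PseudoMetricSpace X] (ε : ℝ) (s : Set X) : Prop :=
  ∀ x y : s, ReflTransGen (fun a b : s => dist a b ≤ ε) x y

section Chainable

variable {X Y ι : Type*} [PseudoMetricSpace X] [PseudoMetricSpace Y] {ε : ℝ}

theorem isChainable_diam {s : Set X} (hs : Bornology.IsBounded s) :
    IsChainable (Metric.diam s) s :=
  fun x y => .single (Metric.dist_le_diam_of_mem hs x.2 y.2)

theorem IsChainable.image {s : Set X} {f : X → Y} {K : ℝ≥0} (hs : IsChainable ε s)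
    (hf : LipschitzOnWith K f s) : IsChainable (K * ε) (f '' s) := by
  rintro ⟨_, x, hx, rfl⟩ ⟨_, y, hy, rfl⟩
  refine (hs ⟨x, hx⟩ ⟨y, hy⟩).lift (imageFactorization f s) fun a b hab => ?_
  calc dist (f a) (f b) ≤ K * dist a b := hf.dist_le_mul a a.2 b b.2
    _ ≤ K * ε := by gcongr

theorem IsChainable.iUnion {s : ι → Set X} (hs : ∀ i, IsChainable ε (s i))
    (hconn : (intersectionGraph s).Preconnected) : IsChainable ε (⋃ i, s i) := by
  have within (i : ι) (x y : s i) : ReflTransGen (fun a b : ⋃ i, s i => dist a b ≤ ε)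
      (inclusion (subset_iUnion s i) x) (inclusion (subset_iUnion s i) y) :=
    (hs i x y).lift _ fun _ _ hab => hab
  rintro ⟨x, hx⟩ ⟨y, hy⟩
  obtain ⟨i, hxi⟩ := mem_iUnion.1 hx
  obtain ⟨j, hyj⟩ := mem_iUnion.1 hy
  obtain ⟨walk⟩ := hconn i j
  induction walk generalizing x with
  | nil => exact within _ ⟨x, hxi⟩ ⟨y, hyj⟩
  | @cons i k _ hik _ ih =>
    obtain ⟨-, z, hzi, hzk⟩ := hik
    exact (within i ⟨x, hxi⟩ ⟨z, hzi⟩).trans (ih z (mem_iUnion_of_mem k hzk) hzk hyj)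

theorem isPreconnected_of_isChainable {s : Set X} (hs : IsCompact s)
    (hchain : ∀ δ > 0, ∃ ε < δ, IsChainable ε s) : IsPreconnected s := by
  rw [isPreconnected_closed_iff]
  rintro u v hu hv huv ⟨x, hxs, hxu⟩ ⟨y, hys, hyv⟩
  by_contra hdisj
  have hsuv : Disjoint (s ∩ u) v :=
    disjoint_left.2 fun z hz hzv => hdisj ⟨z, hz.1, hz.2, hzv⟩
  obtain ⟨δ, hδ, hgap⟩ := Metric.exists_pos_forall_lt_edist (hs.inter_right hu) hv hsuv
  obtain ⟨ε, hεδ, hε⟩ := hchain δ hδ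
  have mem_u (z : s) (hz : ReflTransGen (fun a b : s => dist a b ≤ ε) ⟨x, hxs⟩ z) : ↑z ∈ u := by
    induction hz with
    | refl => exact hxu
    | @tail a b _ hab ha =>
      refine (huv b.2).resolve_right fun hbv => ?_
      have hδab : (δ : ℝ) < dist (a : X) b := by
        simpa only [edist_nndist, ENNReal.coe_lt_coe, ← NNReal.coe_lt_coe, coe_nndist]
          using hgap a ⟨a.2, ha⟩ b hbv
      exact (hδab.trans_le (hab.trans hεδ.le)).false
  exact hdisj ⟨y, hys, mem_u ⟨y, hys⟩ (hε _ _), hyv⟩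

end Chainable

section SelfSimilar

variable {X ι : Type*} {f : ι → X → X} {A : Set X}

theorem isChainable_pow_mul_diam [PseudoMetricSpace X] {K : ℝ≥0}
    (hf : ∀ k, LipschitzOnWith K (f k) A) (hA : Bornology.IsBounded A)
    (hself : A = ⋃ k, f k '' A) (hconn : (intersectionGraph fun k => f k '' A).Preconnected)
    (n : ℕ) : IsChainable (K ^ n * Metric.diam A) A := by
  induction n with
  | zero => simpa only [pow_zero, one_mul] using isChainable_diam hA
  | succ n ih =>
    have hunion : IsChainable (K * (K ^ n * Metric.diam A)) (⋃ k, f k '' A) :=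
      .iUnion (fun k => ih.image (hf k)) hconn
    rwa [← hself, ← mul_assoc, ← pow_succ'] at hunion

theorem isPreconnected_of_intersectionGraph_preconnected [PseudoMetricSpace X] {K : ℝ≥0}
    (hAc : IsCompact A) (hK : K < 1) (hf : ∀ k, LipschitzOnWith K (f k) A)
    (hself : A = ⋃ k, f k '' A) (hconn : (intersectionGraph fun k => f k '' A).Preconnected) :
    IsPreconnected A := by
  refine isPreconnected_of_isChainable hAc fun δ hδ => ?_
  have hlim : Tendsto (fun n : ℕ => (K : ℝ) ^ n * Metric.diam A) atTop (𝓝 0) := by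
    simpa only [zero_mul] using
      (tendsto_pow_atTop_nhds_zero_of_lt_one K.coe_nonneg hK).mul_const (Metric.diam A)
  obtain ⟨n, hn⟩ := (hlim.eventually_lt_const hδ).exists
  exact ⟨_, hn, isChainable_pow_mul_diam hf hAc.isBounded hself hconn n⟩

theorem stmt_3_general [MetricSpace X] [Finite ι] {K : ι → ℝ≥0} (hK : ∀ k, K k < 1)
    (hf : ∀ k, LipschitzOnWith (K k) (f k) A) (hA : A.Nonempty) (hAc : IsCompact A)
    (hself : A = ⋃ k, f k '' A) :
    IsConnected A ↔ (intersectionGraph fun k => f k '' A).Connected := by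
  have : Nonempty ι := by
    rw [hself, nonempty_iUnion] at hA
    exact hA.nonempty
  constructor
  · intro hconn
    have hclosed (k : ι) : IsClosed (f k '' A) :=
      (hAc.image_of_continuousOn (hf k).continuousOn).isClosed
    exact ⟨intersectionGraph_preconnected_of_isPreconnected_iUnion (locallyFinite_of_finite _)
      hclosed (fun k => hA.image (f k)) (hself ▸ hconn.isPreconnected)⟩
  · intro hconn
    obtain ⟨kmax, hkmax⟩ := Finite.exists_max K
    exact ⟨hA, isPreconnected_of_intersectionGraph_preconnected hAc (hK kmax)
      (fun k => (hf k).weaken (hkmax k)) hself hconn.preconnected⟩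

end SelfSimilar

/-- Hata's connectedness criterion: the attractor `A` is connected iff the
connectedness graph `G_c` (vertices `1,…,m`, edges between `k ≠ j` with
`f k '' A ∩ f j '' A ≠ ∅`) is connected. -/
theorem stmt_3 {d : ℕ} {m : ℕ}
    (f : Fin m → EuclideanSpace ℝ (Fin d) → EuclideanSpace ℝ (Fin d))
    (r : ℝ) (hr0 : 0 < r) (hr1 : r < 1)
    (hsim : ∀ k, ∀ x y, dist (f k x) (f k y) = r * dist x y)
    (A : Set (EuclideanSpace ℝ (Fin d))) (hA : A.Nonempty) (hAc : IsCompact A)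
    (hself : A = ⋃ k, f k '' A)
    (G : SimpleGraph (Fin m))
    (hG : ∀ k j : Fin m, G.Adj k j ↔ k ≠ j ∧ ((f k '' A) ∩ (f j '' A)).Nonempty) :
    IsConnected A ↔ G.Connected := by
  obtain rfl : G = intersectionGraph fun k => f k '' A := SimpleGraph.ext (by ext; exact hG _ _)
  exact stmt_3_general (K := fun _ => ⟨r, hr0.le⟩) (fun _ => hr1)
    (fun k => (LipschitzWith.of_dist_le_mul fun x y => (hsim k x y).le).lipschitzOnWith)
    hA hAc hself
end

section
/- Let S be a 2×2 real matrix with SᵀS = I and det S = 1 (a plane rotation matrix), and assume S ≠ I and S ≠ −I. Let G be a 2×2 real matrix of the form G = k·R, where k > 0 is real and R is a 2×2 real matrix with RᵀR = I and det R = 1 (so G is the matrix of a similarity map with positive determinant). Suppose there exists an invertible 2×2 real matrix P such that both P^{-1}·S·P and P^{-1}·G·P have all entries rational. Then there exist rational numbers b, c such that G = b·S + c·I. -/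
open Matrix

/-!
Rotations of the plane commute, and a rotation other than `±1` is not a scalar matrix. Conjugating
rational matrices by `P` is an injective `ℚ`-algebra homomorphism, so the rational matrices behind
`S` and `G` commute as well and the one behind `S` is not scalar. In dimension two the centralizer
of a non-scalar endomorphism `f` consists of the combinations `b • f + c • 1`, because some `v`
makes `v, f v` a basis; over `ℚ` this gives rational coefficients at once, and the homomorphism
carries the relation to `G` and `S`.
-/

section Centralizer

lemma exists_linearIndependent_pair_apply {R V : Type*} [CommRing R] [IsDomain R]
    [AddCommGroup V] [Module R V] [Module.Free R V] {f : Module.End R V}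
    (hf : f ∉ Set.range (algebraMap R (Module.End R V))) :
    ∃ v, LinearIndependent R ![v, f v] := by
  by_contra! h
  obtain ⟨a, rfl⟩ := LinearMap.exists_eq_smul_id_of_forall_notLinearIndependent h
  exact hf ⟨a, Algebra.algebraMap_eq_smul_one a⟩

variable {K : Type*} [Field K]

lemma exists_end_eq_smul_add_smul_one_of_commute {V : Type*} [AddCommGroup V] [Module K V]
    (hV : Module.finrank K V = 2) {f g : Module.End K V}
    (hf : f ∉ Set.range (algebraMap K (Module.End K V))) (hfg : Commute f g) :
    ∃ b c : K, g = b • f + c • 1 := by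
  obtain ⟨v, hv⟩ := exists_linearIndependent_pair_apply hf
  let e := basisOfLinearIndependentOfCardEqFinrank hv (by simp [hV])
  have he : ⇑e = ![v, f v] := coe_basisOfLinearIndependentOfCardEqFinrank hv _
  obtain ⟨b, c, hgv⟩ : ∃ b c : K, g v = b • f v + c • v :=
    ⟨e.repr (g v) 1, e.repr (g v) 0, by
      simpa [he, Fin.sum_univ_two, add_comm] using (e.sum_repr (g v)).symm⟩
  have hgfv : g (f v) = b • f (f v) + c • f v := by
    rw [← Module.End.mul_apply, ← hfg.eq, Module.End.mul_apply, hgv, map_add, map_smul, map_smul]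
  refine ⟨b, c, e.ext fun i => ?_⟩
  fin_cases i
  · simpa [he] using hgv
  · simpa [he] using hgfv

lemma exists_matrix_eq_smul_add_smul_one_of_commute {A B : Matrix (Fin 2) (Fin 2) K}
    (hA : A ∉ Set.range (algebraMap K (Matrix (Fin 2) (Fin 2) K))) (hAB : Commute A B) :
    ∃ b c : K, B = b • A + c • 1 := by
  have hA' : toLinAlgEquiv' A ∉ Set.range (algebraMap K (Module.End K (Fin 2 → K))) :=
    fun ⟨a, ha⟩ => hA ⟨a, toLinAlgEquiv'.injective ((toLinAlgEquiv'.commutes a).trans ha)⟩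
  obtain ⟨b, c, h⟩ := exists_end_eq_smul_add_smul_one_of_commute (by simp) hA'
    (hAB.map toLinAlgEquiv')
  exact ⟨b, c, toLinAlgEquiv'.injective (by simpa only [map_add, map_smul, map_one] using h)⟩

lemma exists_map_eq_smul_add_smul_one_of_commute {E : Type*} [Ring E] [Algebra K E]
    (φ : Matrix (Fin 2) (Fin 2) K →ₐ[K] E) {A B : Matrix (Fin 2) (Fin 2) K}
    (hA : φ A ∉ Set.range (algebraMap K E)) (hAB : Commute (φ A) (φ B)) :
    ∃ b c : K, φ B = b • φ A + c • 1 := by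
  have : Nontrivial E :=
    not_subsingleton_iff_nontrivial.mp fun _ => hA ⟨0, Subsingleton.elim _ _⟩
  -- The matrix ring over a field is simple.
  have hφ : Function.Injective φ := φ.toRingHom.injective
  have hA' : A ∉ Set.range (algebraMap K (Matrix (Fin 2) (Fin 2) K)) := by
    rintro ⟨a, rfl⟩
    exact hA ⟨a, (φ.commutes a).symm⟩
  obtain ⟨b, c, rfl⟩ := exists_matrix_eq_smul_add_smul_one_of_commute hA' (hAB.of_map hφ)
  exact ⟨b, c, by simp only [map_add, map_smul, map_one]⟩

end Centralizer

section BaseChange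

variable {n K L : Type*} [Fintype n] [DecidableEq n] [CommRing K] [CommRing L] [Algebra K L]

variable (K) in
/-- The algebra homomorphism `A ↦ P * A * P⁻¹` from matrices over `K` to matrices over a
commutative `K`-algebra `L`; its image consists of the matrices that have entries in `K` with
respect to the basis formed by the columns of `P`. -/
noncomputable def conjMapMatrix (P : (Matrix n n L)ˣ) : Matrix n n K →ₐ[K] Matrix n n L :=
  (MulSemiringAction.toAlgHom K (Matrix n n L) (ConjAct.toConjAct P)).comp
    (Algebra.ofId K L).mapMatrix

lemma conjMapMatrix_apply (P : (Matrix n n L)ˣ) (A : Matrix n n K) :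
    conjMapMatrix K P A = P * A.map (algebraMap K L) * (P : Matrix n n L)⁻¹ := by
  rw [← coe_units_inv]
  rfl

lemma exists_conjMapMatrix_eq {P : (Matrix n n L)ˣ} {M : Matrix n n L}
    (hM : ∀ i j, ∃ q : K, ((P : Matrix n n L)⁻¹ * M * P) i j = algebraMap K L q) :
    ∃ A, conjMapMatrix K P A = M := by
  choose A hA using hM
  have hA' : (of A).map (algebraMap K L) = (P : Matrix n n L)⁻¹ * M * P := (ext hA).symm
  refine ⟨of A, ?_⟩
  rw [conjMapMatrix_apply, hA', ← coe_units_inv, mul_assoc _ M, Units.mul_inv_cancel_left,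
    Units.mul_inv_cancel_right]

end BaseChange

section Rotation

lemma eq_one_or_neg_one_of_mem_orthogonalGroup_of_mem_range_scalar {n R : Type*} [Fintype n]
    [DecidableEq n] [CommRing R] [NoZeroDivisors R] {A : Matrix n n R}
    (hA : A ∈ orthogonalGroup n R) (hscalar : A ∈ Set.range (scalar n)) : A = 1 ∨ A = -1 := by
  obtain ⟨a, rfl⟩ := hscalar
  have hsq : scalar n a * scalar n a = 1 := by
    simpa only [mem_orthogonalGroup_iff, scalar_apply, diagonal_transpose] using hA
  cases isEmpty_or_nonempty n
  · exact .inl (Subsingleton.elim _ _)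
  · have ha : a * a = 1 := by rwa [← scalar_inj (n := n), map_mul, map_one]
    exact (mul_self_eq_one_iff.mp ha).imp (by rintro rfl; rw [map_one])
      (by rintro rfl; rw [map_neg, map_one])

lemma commute_of_mem_specialOrthogonalGroup_fin_two {R : Type*} [CommRing R]
    {A B : Matrix (Fin 2) (Fin 2) R} (hA : A ∈ specialOrthogonalGroup (Fin 2) R)
    (hB : B ∈ specialOrthogonalGroup (Fin 2) R) : Commute A B := by
  obtain ⟨hA_diag, hA_anti, -⟩ := mem_specialOrthogonalGroup_fin_two_iff.mp hA
  obtain ⟨hB_diag, hB_anti, -⟩ := mem_specialOrthogonalGroup_fin_two_iff.mp hB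
  rw [commute_iff_eq, eta_fin_two A, eta_fin_two B, hA_diag, hA_anti, hB_diag, hB_anti,
    mul_fin_two, mul_fin_two]
  ring_nf

end Rotation

theorem stmt_14_general {K L : Type*} [Field K] [CommRing L] [Algebra K L]
    {S G P : Matrix (Fin 2) (Fin 2) L} (hS : S ∉ Set.range (scalar (Fin 2)))
    (hSG : Commute S G) (hP : IsUnit P.det)
    (hSK : ∀ i j, ∃ q : K, (P⁻¹ * S * P) i j = algebraMap K L q)
    (hGK : ∀ i j, ∃ q : K, (P⁻¹ * G * P) i j = algebraMap K L q) :
    ∃ b c : K, G = b • S + c • 1 := by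
  obtain ⟨P, rfl⟩ := (isUnit_iff_isUnit_det P).mpr hP
  obtain ⟨A, rfl⟩ := exists_conjMapMatrix_eq hSK
  obtain ⟨B, rfl⟩ := exists_conjMapMatrix_eq hGK
  exact exists_map_eq_smul_add_smul_one_of_commute (conjMapMatrix K P)
    (fun ⟨a, ha⟩ => hS ⟨algebraMap K L a, ha⟩) hSG

/-- If a rotation `S ≠ ±I` and a positive-determinant similarity matrix `G = k·R`
are both rational with respect to the same basis, then `G = b·S + c·I` for some
rational `b, c`. -/
theorem stmt_14 (S : Matrix (Fin 2) (Fin 2) ℝ)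
    (hSorth : Sᵀ * S = 1) (hSdet : S.det = 1) (hS1 : S ≠ 1) (hSneg1 : S ≠ -1)
    (G R : Matrix (Fin 2) (Fin 2) ℝ) (k : ℝ) (hk : 0 < k)
    (hRorth : Rᵀ * R = 1) (hRdet : R.det = 1) (hG : G = k • R)
    (P : Matrix (Fin 2) (Fin 2) ℝ) (hP : IsUnit P.det)
    (hSrat : ∀ i j, ∃ q : ℚ, (P⁻¹ * S * P) i j = (q : ℝ))
    (hGrat : ∀ i j, ∃ q : ℚ, (P⁻¹ * G * P) i j = (q : ℝ)) :
    ∃ b c : ℚ, G = (b : ℝ) • S + (c : ℝ) • (1 : Matrix (Fin 2) (Fin 2) ℝ) := by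
  have hSrot : S ∈ specialOrthogonalGroup (Fin 2) ℝ :=
    ⟨(mem_orthogonalGroup_iff' _ _).mpr hSorth, hSdet⟩
  have hRrot : R ∈ specialOrthogonalGroup (Fin 2) ℝ :=
    ⟨(mem_orthogonalGroup_iff' _ _).mpr hRorth, hRdet⟩
  have hS : S ∉ Set.range (scalar (Fin 2)) := fun h =>
    (eq_one_or_neg_one_of_mem_orthogonalGroup_of_mem_range_scalar hSrot.1 h).elim hS1 hSneg1
  have hSG : Commute S G :=
    hG ▸ (commute_of_mem_specialOrthogonalGroup_fin_two hSrot hRrot).smul_right k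
  simpa only [Rat.cast_smul_eq_qsmul] using stmt_14_general hS hSG hP hSrat hGrat
end

section
/- Let d be a positive squarefree integer. (1) For all integers m, n one has (n² − d·m²)² + d·(2mn)² = (n² + d·m²)². (2) Conversely, if u, v, w are positive integers with u² + d·v² = w², then there exist positive integers m, n with n² > d·m² such that u·(n² + d·m²) = w·(n² − d·m²) and v·(n² + d·m²) = w·(2mn); that is, (u/w, v/w) = ((n² − dm²)/(n² + dm²), 2mn/(n² + dm²)). -/
/-!
Multiplying `z = n + m√-d` by itself gives `z² = (n² - dm²) + 2mn√-d`, of norm `(n² + dm²)²`.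
Conversely `t = (u + v√-d) / w` has modulus `1`, so `t = z / z̄ = z² / (z z̄)` for `z = 1 + t`
(Hilbert 90). Clearing denominators, `z = (u + w) + v√-d`, that is `m = v` and `n = u + w`.
-/

/-- `(u, v, w)` is a generalized Pythagorean triple for `d`, that is, `u + v√-d` has norm `w²`.
Signs and degenerate values are unrestricted. -/
def GeneralizedPythagoreanTriple {R : Type*} [CommRing R] (d u v w : R) : Prop :=
  u ^ 2 + d * v ^ 2 = w ^ 2

namespace GeneralizedPythagoreanTriple

variable {R : Type*} [CommRing R]

theorem of_euclid_formula (d m n : R) :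
    GeneralizedPythagoreanTriple d (n ^ 2 - d * m ^ 2) (2 * m * n) (n ^ 2 + d * m ^ 2) := by
  unfold GeneralizedPythagoreanTriple
  ring

variable {d u v w : R}

theorem add_sq_add_mul_sq (h : GeneralizedPythagoreanTriple d u v w) :
    (u + w) ^ 2 + d * v ^ 2 = 2 * w * (u + w) :=
  calc (u + w) ^ 2 + d * v ^ 2
      = (u ^ 2 + d * v ^ 2) + 2 * u * w + w ^ 2 := by ring
    _ = w ^ 2 + 2 * u * w + w ^ 2 := by rw [h]
    _ = 2 * w * (u + w) := by ring

theorem add_sq_sub_mul_sq (h : GeneralizedPythagoreanTriple d u v w) :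
    (u + w) ^ 2 - d * v ^ 2 = 2 * u * (u + w) :=
  calc (u + w) ^ 2 - d * v ^ 2
      = 2 * u ^ 2 + 2 * u * w + w ^ 2 - (u ^ 2 + d * v ^ 2) := by ring
    _ = 2 * u ^ 2 + 2 * u * w + w ^ 2 - w ^ 2 := by rw [h]
    _ = 2 * u * (u + w) := by ring

theorem mul_sq_lt_add_sq [PartialOrder R] [IsStrictOrderedRing R]
    (h : GeneralizedPythagoreanTriple d u v w) (hu : 0 < u) (huw : 0 < u + w) :
    d * v ^ 2 < (u + w) ^ 2 := by
  rw [← sub_pos, h.add_sq_sub_mul_sq]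
  positivity

end GeneralizedPythagoreanTriple

theorem stmt_17_general {R : Type*} [CommRing R] [PartialOrder R] [IsStrictOrderedRing R] (d : R) :
    (∀ m n : R,
      GeneralizedPythagoreanTriple d (n ^ 2 - d * m ^ 2) (2 * m * n) (n ^ 2 + d * m ^ 2)) ∧
    (∀ u v w : R, 0 < u → 0 < v → 0 < w → GeneralizedPythagoreanTriple d u v w →
      ∃ m n : R, 0 < m ∧ 0 < n ∧ d * m ^ 2 < n ^ 2 ∧
        u * (n ^ 2 + d * m ^ 2) = w * (n ^ 2 - d * m ^ 2) ∧
        v * (n ^ 2 + d * m ^ 2) = w * (2 * m * n)) := by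
  refine ⟨.of_euclid_formula d, fun u v w hu hv hw h => ?_⟩
  have huw : 0 < u + w := add_pos hu hw
  refine ⟨v, u + w, hv, huw, h.mul_sq_lt_add_sq hu huw, ?_, ?_⟩
  · rw [h.add_sq_add_mul_sq, h.add_sq_sub_mul_sq]
    ring
  · rw [h.add_sq_add_mul_sq]
    ring

/-- Euclid's formula for generalized Pythagorean triples `u² + d·v² = w²`:
the formula always yields such triples, and every triple of positive integers
arises this way (up to a common factor). -/
theorem stmt_17 (d : ℕ) (hd : 0 < d) (hdsf : Squarefree d) :
    (∀ m n : ℤ, (n ^ 2 - (d : ℤ) * m ^ 2) ^ 2 + (d : ℤ) * (2 * m * n) ^ 2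
        = (n ^ 2 + (d : ℤ) * m ^ 2) ^ 2) ∧
    (∀ u v w : ℤ, 0 < u → 0 < v → 0 < w → u ^ 2 + (d : ℤ) * v ^ 2 = w ^ 2 →
      ∃ m n : ℤ, 0 < m ∧ 0 < n ∧ (d : ℤ) * m ^ 2 < n ^ 2 ∧
        u * (n ^ 2 + (d : ℤ) * m ^ 2) = w * (n ^ 2 - (d : ℤ) * m ^ 2) ∧
        v * (n ^ 2 + (d : ℤ) * m ^ 2) = w * (2 * m * n)) :=
  stmt_17_general (d : ℤ)
end
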